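/- Let q be a real number with 0 < q < 1. Then Γ₁² + Γ₂² = φ(q)⁴/(4·φ(−q^{10})⁴) + φ(q⁵)⁴/(4·φ(−q^{10})⁴) − φ(q)²·φ(q⁵)²/(2·φ(−q^{10})⁴) + 2·ψ(q)·ψ(−q⁵)/(ψ(−q)·ψ(q⁵)). -/

import Mathlib

/-- Ramanujan's theta function `f(a,b) = ∑_{n ∈ ℤ} a^(n(n+1)/2) b^(n(n-1)/2)`. -/
noncomputable def ramTheta (a b : ℂ) : ℂ :=
  ∑' n : ℤ, a ^ ((n * (n + 1)) / 2).toNat * b ^ ((n * (n - 1)) / 2).toNat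

/-- `φ(q) = f(q,q)`. -/
noncomputable def phi (q : ℂ) : ℂ := ramTheta q q

/-- `ψ(q) = f(q,q³)`. -/
noncomputable def psi (q : ℂ) : ℂ := ramTheta q (q ^ 3)

/-- `(a;q)_∞ = ∏_{k=0}^∞ (1 - a q^k)`. -/
noncomputable def qPochInf (a q : ℂ) : ℂ := ∏' k : ℕ, (1 - a * q ^ k)

noncomputable def Gamma1 (q : ℝ) : ℂ :=
  ramTheta (q : ℂ) ((q : ℂ) ^ 9) / ramTheta (-(q : ℂ)) (-(q : ℂ) ^ 9)

noncomputable def Gamma2 (q : ℝ) : ℂ :=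
  ramTheta ((q : ℂ) ^ 3) ((q : ℂ) ^ 7) / ramTheta (-(q : ℂ) ^ 3) (-(q : ℂ) ^ 7)

/-
For the two quotients `X = f(q,q⁹)/f(-q,-q⁹)` and `Y = f(q³,q⁷)/f(-q³,-q⁷)` one has
`X - Y = (φ(q)² - φ(q⁵)²) / (2 φ(-q¹⁰)²)` and `X Y = ψ(q) ψ(-q⁵) / (ψ(-q) ψ(q⁵))`, and
`X² + Y² = (X - Y)² + 2 X Y`. The product is read off from the Jacobi triple product. For the
difference, splitting the double series of `f(a,b) f(c,d)` by the parity of the sum of the indices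
evaluates the numerator and the product of the denominators, and summing
`φ(q)² = ∑ q ^ (x² + y²)` over the cosets of the ideal `(2 - i)` of `ℤ[i]` gives
`φ(q)² - φ(q⁵)² = 4 q f(q,q⁹) f(q³,q⁷)`.
-/

open Filter Topology

section Dissection

variable {ι α β M : Type*} [Fintype ι] [CommMonoid M] [TopologicalSpace M] [ContinuousMul M]

@[to_additive]
theorem hasProd_of_bijective_uncurry {f : β → M} {g : ι → α → β}
    (hg : Function.Bijective (Function.uncurry g)) {s : ι → M}
    (hs : ∀ i, HasProd (f ∘ g i) (s i)) : HasProd f (∏ i, s i) := by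
  have h_inj (i : ι) : Function.Injective (g i) := fun x y hxy =>
    congrArg Prod.snd (hg.injective (a₁ := (i, x)) (a₂ := (i, y)) hxy)
  have h_disj : ((Finset.univ : Finset ι) : Set ι).Pairwise
      (Function.onFun Disjoint fun i => Set.range (g i)) := by
    refine fun i _ j _ hij => Set.disjoint_left.2 ?_
    rintro _ ⟨x, rfl⟩ ⟨y, hxy⟩
    exact hij (congrArg Prod.fst (hg.injective (a₁ := (j, y)) (a₂ := (i, x)) hxy)).symm
  have h_cover : ⋃ i ∈ (Finset.univ : Finset ι), Set.range (g i) = Set.univ := by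
    refine Set.eq_univ_of_forall fun z => ?_
    obtain ⟨⟨i, x⟩, rfl⟩ := hg.surjective z
    exact Set.mem_iUnion₂.2 ⟨i, Finset.mem_univ i, x, rfl⟩
  have h := hasProd_prod_disjoint Finset.univ h_disj fun i _ => (h_inj i).hasProd_range_iff.2 (hs i)
  rwa [h_cover, hasProd_subtype_iff_mulIndicator, Set.mulIndicator_univ] at h

end Dissection

section IntegerLattice

variable {M : Type*} [AddCommMonoid M] [TopologicalSpace M] [ContinuousAdd M]

theorem hasSum_int_prod_of_parity {F : ℤ × ℤ → M} {S₀ S₁ : M}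
    (h₀ : HasSum (fun p : ℤ × ℤ => F (p.1 + p.2, p.1 - p.2)) S₀)
    (h₁ : HasSum (fun p : ℤ × ℤ => F (1 - (p.1 + p.2), p.2 - p.1)) S₁) : HasSum F (S₀ + S₁) := by
  let g : Fin 2 → ℤ × ℤ → ℤ × ℤ :=
    ![fun p => (p.1 + p.2, p.1 - p.2), fun p => (1 - (p.1 + p.2), p.2 - p.1)]
  have hg : Function.Bijective (Function.uncurry g) := by
    constructor
    · rintro ⟨i, a, b⟩ ⟨j, c, d⟩ h
      fin_cases i <;> fin_cases j <;>
        simp only [g, Function.uncurry_apply_pair, Fin.zero_eta, Fin.mk_one, Matrix.cons_val,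
          Prod.mk.injEq, true_and, Fin.reduceEq, false_and] at h ⊢ <;> omega
    · rintro ⟨x, y⟩
      rcases Int.emod_two_eq_zero_or_one (x + y) with h | h
      · refine ⟨(0, (x + y) / 2, (x - y) / 2), ?_⟩
        simp only [g, Function.uncurry_apply_pair, Matrix.cons_val, Prod.mk.injEq]
        omega
      · refine ⟨(1, (1 - x - y) / 2, (1 - x + y) / 2), ?_⟩
        simp only [g, Function.uncurry_apply_pair, Matrix.cons_val, Prod.mk.injEq]
        omega
  simpa using hasSum_of_bijective_uncurry hg (s := ![S₀, S₁]) (Fin.forall_fin_two.2 ⟨h₀, h₁⟩)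

/-- Multiplication by `i` on `ℤ[i]`, whose elements `x + y * i` are encoded as pairs `(x, y)`. -/
def mulI (p : ℤ × ℤ) : ℤ × ℤ := (-p.2, p.1)

/-- The parametrization `z ↦ (2 - i) * z - 1` of the coset of `-1` modulo the ideal `(2 - i)`. -/
def baseCoset (p : ℤ × ℤ) : ℤ × ℤ := (2 * p.1 + p.2 - 1, 2 * p.2 - p.1)

/-- Parametrizations of the five cosets of the ideal `(2 - i)` of `ℤ[i]`: the ideal itself, then the
four nonzero cosets, which multiplication by `i` permutes cyclically. -/
def cosetParam : Fin 5 → ℤ × ℤ → ℤ × ℤ :=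
  ![fun p => (2 * p.1 + p.2, 2 * p.2 - p.1), baseCoset, mulI ∘ baseCoset, mulI ∘ mulI ∘ baseCoset,
    mulI ∘ mulI ∘ mulI ∘ baseCoset]

theorem bijective_uncurry_cosetParam : Function.Bijective (Function.uncurry cosetParam) := by
  constructor
  · rintro ⟨i, a, b⟩ ⟨j, c, d⟩ h
    fin_cases i <;> fin_cases j <;>
      simp only [cosetParam, baseCoset, mulI, Function.uncurry_apply_pair, Function.comp_apply,
        Fin.zero_eta, Fin.mk_one, Fin.reduceFinMk, Matrix.cons_val, Prod.mk.injEq, true_and,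
        Fin.reduceEq, false_and] at h ⊢ <;> omega
  · rintro ⟨x, y⟩
    have h : (x + 2 * y) % 5 = 0 ∨ (x + 2 * y) % 5 = 4 ∨ (x + 2 * y) % 5 = 3 ∨
      (x + 2 * y) % 5 = 1 ∨ (x + 2 * y) % 5 = 2 := by omega
    rcases h with h | h | h | h | h
    · use (0, (2 * x - y) / 5, (x + 2 * y) / 5)
      simp only [cosetParam, Function.uncurry_apply_pair, Matrix.cons_val, Prod.mk.injEq]
      omega
    · use (1, (2 * x - y + 2) / 5, (x + 2 * y + 1) / 5)
      simp only [cosetParam, baseCoset, Function.uncurry_apply_pair, Matrix.cons_val, Prod.mk.injEq]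
      omega
    · use (2, (2 * y + x + 2) / 5, (y - 2 * x + 1) / 5)
      simp only [cosetParam, baseCoset, mulI, Function.uncurry_apply_pair, Matrix.cons_val,
        Function.comp_apply, Prod.mk.injEq]
      omega
    · use (3, (y - 2 * x + 2) / 5, (1 - x - 2 * y) / 5)
      simp only [cosetParam, baseCoset, mulI, Function.uncurry_apply_pair, Matrix.cons_val,
        Function.comp_apply, Prod.mk.injEq]
      omega
    · use (4, (2 - 2 * y - x) / 5, (2 * x - y + 1) / 5)
      simp only [cosetParam, baseCoset, mulI, Function.uncurry_apply_pair, Matrix.cons_val,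
        Function.comp_apply, Prod.mk.injEq]
      omega

theorem hasSum_int_prod_of_rotation_invariant {F : ℤ × ℤ → M} {S₀ S₁ : M}
    (hF : ∀ x y, F (-y, x) = F (x, y))
    (h₀ : HasSum (fun p : ℤ × ℤ => F (2 * p.1 + p.2, 2 * p.2 - p.1)) S₀)
    (h₁ : HasSum (fun p : ℤ × ℤ => F (2 * p.1 + p.2 - 1, 2 * p.2 - p.1)) S₁) :
    HasSum F (S₀ + 4 • S₁) := by
  have hF_mulI (f : ℤ × ℤ → ℤ × ℤ) : F ∘ mulI ∘ f = F ∘ f := funext fun p => hF _ _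
  have hs₁ : HasSum (F ∘ baseCoset) S₁ := h₁
  have hs : ∀ i, HasSum (F ∘ cosetParam i) ((![S₀, S₁, S₁, S₁, S₁] : Fin 5 → M) i) := by
    intro i
    fin_cases i
    · exact h₀
    all_goals simpa [cosetParam, hF_mulI] using hs₁
  have h := hasSum_of_bijective_uncurry bijective_uncurry_cosetParam hs
  rw [Fin.sum_univ_five] at h
  convert h using 1
  simp only [Matrix.cons_val, succ_nsmul, zero_nsmul, zero_add, add_assoc]

end IntegerLattice

section QPochhammer

/-- The finite `q`-Pochhammer symbol `(a; q)_n`. -/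
noncomputable def qPoch (a q : ℂ) (n : ℕ) : ℂ := ∏ k ∈ Finset.range n, (1 - a * q ^ k)

theorem qPoch_succ (a q : ℂ) (n : ℕ) : qPoch a q (n + 1) = qPoch a q n * (1 - a * q ^ n) :=
  Finset.prod_range_succ _ n

variable {q : ℂ}

theorem norm_pow_lt_one (hq : ‖q‖ < 1) {n : ℕ} (hn : n ≠ 0) : ‖q ^ n‖ < 1 := by
  rw [norm_pow]
  exact pow_lt_one₀ (norm_nonneg q) hq hn

theorem multipliable_one_sub_mul_pow (a : ℂ) (hq : ‖q‖ < 1) :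
    Multipliable fun k : ℕ => 1 - a * q ^ k := by
  have h : Summable fun k : ℕ => ‖-a * q ^ k‖ := by
    simpa only [norm_mul, norm_pow] using
      (summable_geometric_of_lt_one (norm_nonneg q) hq).mul_left ‖-a‖
  simpa only [neg_mul, ← sub_eq_add_neg] using multipliable_one_add_of_summable h

theorem tendsto_qPoch (a : ℂ) (hq : ‖q‖ < 1) :
    Tendsto (qPoch a q) atTop (𝓝 (qPochInf a q)) :=
  (multipliable_one_sub_mul_pow a hq).hasProd.tendsto_prod_nat

theorem one_sub_mul_pow_ne_zero {a : ℂ} (ha : ‖a‖ < 1) (hq : ‖q‖ < 1) (k : ℕ) :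
    1 - a * q ^ k ≠ 0 := by
  have h : ‖a * q ^ k‖ < 1 := by
    rw [norm_mul, norm_pow]
    exact mul_lt_one_of_nonneg_of_lt_one_left (norm_nonneg a) ha (pow_le_one₀ (norm_nonneg q) hq.le)
  intro h0
  rw [← sub_eq_zero.1 h0, norm_one] at h
  exact lt_irrefl 1 h

theorem qPochInf_ne_zero {a : ℂ} (ha : ‖a‖ < 1) (hq : ‖q‖ < 1) : qPochInf a q ≠ 0 := by
  have h : Summable fun k : ℕ => ‖-(a * q ^ k)‖ := by
    simpa only [norm_neg, norm_mul, norm_pow] using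
      (summable_geometric_of_lt_one (norm_nonneg q) hq).mul_left ‖a‖
  simpa only [qPochInf, sub_eq_add_neg] using
    tprod_one_add_ne_zero_of_summable
      (fun k => by simpa only [← sub_eq_add_neg] using one_sub_mul_pow_ne_zero ha hq k) h

theorem qPochInf_eq_prod_fin (a : ℂ) (hq : ‖q‖ < 1) (d : ℕ) [NeZero d] :
    qPochInf a q = ∏ r : Fin d, qPochInf (a * q ^ (r : ℕ)) (q ^ d) := by
  have hqd : ‖q ^ d‖ < 1 := norm_pow_lt_one hq (NeZero.ne d)
  have h_bij : Function.Bijective (Function.uncurry fun (r : Fin d) (k : ℕ) => k * d + r) :=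
    ((Equiv.prodComm (Fin d) ℕ).trans (Nat.divModEquiv d).symm).bijective
  refine (hasProd_of_bijective_uncurry h_bij fun r => ?_).tprod_eq
  have h_term : ((fun k => 1 - a * q ^ k) ∘ fun k => k * d + (r : ℕ)) =
      fun k => 1 - a * q ^ (r : ℕ) * (q ^ d) ^ k := by
    funext k
    rw [Function.comp_apply, add_comm, pow_add, mul_comm k d, pow_mul, mul_assoc]
  rw [h_term]
  exact (multipliable_one_sub_mul_pow _ hqd).hasProd

end QPochhammer

section QBinomial

/-- The reciprocal `1 / (q; q)_x`, extended by zero to negative `x`, as is customary for reciprocals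
of factorials: the recurrence `invQFactorial_sub_one` then holds on all of `ℤ`. -/
noncomputable def invQFactorial (q : ℂ) (x : ℤ) : ℂ := if 0 ≤ x then (qPoch q q x.toNat)⁻¹ else 0

/-- The Gaussian binomial coefficient `[m + n, n + j]_q`, indexed by the offset `j` so that it is
supported on `-n ≤ j ≤ m`. -/
noncomputable def offsetQBinomial (q : ℂ) (m n : ℕ) (j : ℤ) : ℂ :=
  qPoch q q (m + n) * invQFactorial q (n + j) * invQFactorial q (m - j)

variable {q : ℂ}

theorem invQFactorial_of_neg {x : ℤ} (hx : x < 0) : invQFactorial q x = 0 :=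
  if_neg (not_le.2 hx)

theorem invQFactorial_natCast (n : ℕ) : invQFactorial q n = (qPoch q q n)⁻¹ :=
  if_pos n.cast_nonneg

theorem invQFactorial_sub_one (hq : ‖q‖ < 1) (x : ℤ) :
    invQFactorial q (x - 1) = (1 - q ^ x) * invQFactorial q x := by
  rcases lt_or_ge x 0 with hx | hx
  · rw [invQFactorial_of_neg hx, invQFactorial_of_neg (by omega), mul_zero]
  lift x to ℕ using hx
  cases x with
  | zero => simp [invQFactorial_of_neg]
  | succ n =>
    have h := one_sub_mul_pow_ne_zero hq hq n
    rw [Nat.cast_succ, add_sub_cancel_right, ← Nat.cast_succ, invQFactorial_natCast,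
      invQFactorial_natCast, qPoch_succ, zpow_natCast, pow_succ']
    field_simp

theorem tendsto_invQFactorial (hq : ‖q‖ < 1) :
    Tendsto (invQFactorial q) atTop (𝓝 (qPochInf q q)⁻¹) := by
  have h_toNat : Tendsto Int.toNat atTop atTop :=
    tendsto_atTop_mono (fun x => x.self_le_toNat) tendsto_id |> tendsto_natCast_atTop_iff.1
  refine (((tendsto_qPoch q hq).inv₀ (qPochInf_ne_zero hq hq)).comp h_toNat).congr' ?_
  filter_upwards [eventually_ge_atTop 0] with x hx
  exact (if_pos hx).symm

theorem exists_norm_invQFactorial_le (hq : ‖q‖ < 1) : ∃ C, ∀ x, ‖invQFactorial q x‖ ≤ C := by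
  obtain ⟨C, hC⟩ :=
    ((tendsto_qPoch q hq).inv₀ (qPochInf_ne_zero hq hq)).norm.bddAbove_range
  have hC_nat (n : ℕ) : ‖invQFactorial q n‖ ≤ C := by
    rw [invQFactorial_natCast]
    exact hC ⟨n, rfl⟩
  refine ⟨C, fun x => ?_⟩
  rcases lt_or_ge x 0 with hx | hx
  · rw [invQFactorial_of_neg hx, norm_zero]
    exact (norm_nonneg _).trans (hC_nat 0)
  · lift x to ℕ using hx
    exact hC_nat x

theorem offsetQBinomial_neg (m n : ℕ) (j : ℤ) :
    offsetQBinomial q m n (-j) = offsetQBinomial q n m j := by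
  rw [offsetQBinomial, offsetQBinomial, add_comm m n, sub_neg_eq_add, ← sub_eq_add_neg]
  ring

theorem offsetQBinomial_zero_zero (j : ℤ) :
    offsetQBinomial q 0 0 j = if j = 0 then 1 else 0 := by
  rcases lt_trichotomy j 0 with hj | rfl | hj
  · simp [offsetQBinomial, invQFactorial_of_neg hj, hj.ne]
  · simp [offsetQBinomial, invQFactorial, qPoch]
  · simp [offsetQBinomial, invQFactorial_of_neg (neg_neg_of_pos hj), hj.ne']

theorem offsetQBinomial_succ_left (hq0 : q ≠ 0) (hq : ‖q‖ < 1) (m n : ℕ) (j : ℤ) :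
    offsetQBinomial q (m + 1) n j =
      offsetQBinomial q m n j + q ^ ((m : ℤ) + 1 - j) * offsetQBinomial q m n (j - 1) := by
  have h_left : invQFactorial q (m - j) =
      (1 - q ^ ((m : ℤ) + 1 - j)) * invQFactorial q (m + 1 - j) := by
    rw [← invQFactorial_sub_one hq]
    congr 1
    ring
  have h_right : invQFactorial q (n + (j - 1)) =
      (1 - q ^ ((n : ℤ) + j)) * invQFactorial q (n + j) := by
    rw [← invQFactorial_sub_one hq, add_sub_assoc]
  have h_pow : q * q ^ (m + n) = q ^ ((m : ℤ) + 1 - j) * q ^ ((n : ℤ) + j) := by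
    rw [← zpow_add₀ hq0, ← pow_succ', ← zpow_natCast]
    congr 1
    push_cast
    ring
  rw [offsetQBinomial, offsetQBinomial, offsetQBinomial, h_left, h_right, add_right_comm m 1 n,
    qPoch_succ, h_pow, show (m : ℤ) - (j - 1) = m + 1 - j by ring]
  push_cast
  ring

theorem tendsto_offsetQBinomial (hq : ‖q‖ < 1) (j : ℤ) :
    Tendsto (fun n : ℕ => offsetQBinomial q n n j) atTop (𝓝 (qPochInf q q)⁻¹) := by
  have h_double : Tendsto (fun n : ℕ => n + n) atTop atTop := tendsto_id.atTop_add_atTop tendsto_id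
  have h_shift (i : ℤ) : Tendsto (fun n : ℕ => (n : ℤ) + i) atTop atTop :=
    tendsto_atTop_add_const_right _ i tendsto_natCast_atTop_atTop
  have h_inv (i : ℤ) := (tendsto_invQFactorial hq).comp (h_shift i)
  have h := (((tendsto_qPoch q hq).comp h_double).mul (h_inv j)).mul (h_inv (-j))
  rwa [mul_inv_cancel₀ (qPochInf_ne_zero hq hq), one_mul] at h

theorem exists_norm_offsetQBinomial_le (hq : ‖q‖ < 1) :
    ∃ C, ∀ m n j, ‖offsetQBinomial q m n j‖ ≤ C := by
  obtain ⟨C₁, hC₁⟩ := (tendsto_qPoch q hq).norm.bddAbove_range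
  obtain ⟨C₂, hC₂⟩ := exists_norm_invQFactorial_le hq
  have hC₁' (n : ℕ) : ‖qPoch q q n‖ ≤ C₁ := hC₁ ⟨n, rfl⟩
  have hC₁_nonneg : 0 ≤ C₁ := (norm_nonneg _).trans (hC₁' 0)
  have hC₂_nonneg : 0 ≤ C₂ := (norm_nonneg _).trans (hC₂ 0)
  refine ⟨C₁ * C₂ * C₂, fun m n j => ?_⟩
  rw [offsetQBinomial, norm_mul, norm_mul]
  gcongr
  exacts [hC₁' _, hC₂ _, hC₂ _]

end QBinomial

section ThetaSeries

theorem ramTheta_zero_zero : ramTheta 0 0 = 1 := by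
  rw [ramTheta, tsum_eq_single 0]
  · simp
  · intro n hn
    rcases lt_or_gt_of_ne hn with hn | hn
    · have h : 0 < n * (n - 1) / 2 := Int.ediv_pos_of_pos_of_dvd (by nlinarith) two_pos.le
        (Int.even_mul_pred_self n).two_dvd
      rw [zero_pow (Int.pos_iff_toNat_pos.1 h).ne', mul_zero]
    · have h : 0 < n * (n + 1) / 2 := Int.ediv_pos_of_pos_of_dvd (by nlinarith) two_pos.le
        (Int.even_mul_succ_self n).two_dvd
      rw [zero_pow (Int.pos_iff_toNat_pos.1 h).ne', zero_mul]

/-- The exponent `n (n - 1) / 2`, for an integer `n` of either sign. -/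
def triangular (n : ℤ) : ℤ := n * (n - 1) / 2

/-- The `n`-th term of the series `f(a, b)`, rewritten as `a ^ n * (a * b) ^ (n * (n - 1) / 2)`.
It agrees with the term of `ramTheta` only for nonzero `a`, since it uses integer powers. -/
noncomputable def thetaTerm (a b : ℂ) (n : ℤ) : ℂ := a ^ n * (a * b) ^ triangular n

theorem two_mul_triangular (n : ℤ) : 2 * triangular n = n * (n - 1) :=
  Int.two_mul_ediv_two_of_even (Int.even_mul_pred_self n)

theorem triangular_nonneg (n : ℤ) : 0 ≤ triangular n := by
  have h := two_mul_triangular n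
  rcases le_or_gt n 0 with hn | hn <;> nlinarith

theorem triangular_add (m n : ℤ) :
    triangular (m + n) = triangular m + triangular n + m * n := by
  have hm := two_mul_triangular m
  have hn := two_mul_triangular n
  have hmn := two_mul_triangular (m + n)
  linarith

theorem triangular_neg (n : ℤ) : triangular (-n) = triangular n + n := by
  have h := two_mul_triangular n
  have hneg := two_mul_triangular (-n)
  linarith

theorem triangular_one : triangular 1 = 0 := rfl

variable {a b : ℂ}

theorem ramTheta_term_eq_thetaTerm (ha : a ≠ 0) (b : ℂ) (n : ℤ) :
    a ^ ((n * (n + 1)) / 2).toNat * b ^ ((n * (n - 1)) / 2).toNat = thetaTerm a b n := by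
  have h_succ : n * (n + 1) / 2 = triangular n + n := by
    rw [← triangular_neg, triangular]
    congr 1
    ring
  have h_nonneg : 0 ≤ triangular n + n := triangular_neg n ▸ triangular_nonneg (-n)
  rw [h_succ, ← triangular, ← zpow_natCast, ← zpow_natCast, Int.toNat_of_nonneg h_nonneg,
    Int.toNat_of_nonneg (triangular_nonneg n), thetaTerm, mul_zpow, zpow_add₀ ha]
  ring

theorem ramTheta_eq_tsum (ha : a ≠ 0) (b : ℂ) : ramTheta a b = ∑' n, thetaTerm a b n :=
  tsum_congr (ramTheta_term_eq_thetaTerm ha b)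

theorem thetaTerm_ne_zero (ha : a ≠ 0) (hb : b ≠ 0) (n : ℤ) : thetaTerm a b n ≠ 0 :=
  mul_ne_zero (zpow_ne_zero n ha) (zpow_ne_zero _ (mul_ne_zero ha hb))

theorem thetaTerm_add_one (ha : a ≠ 0) (hb : b ≠ 0) (n : ℤ) :
    thetaTerm a b (n + 1) = a * (a * b) ^ n * thetaTerm a b n := by
  rw [thetaTerm, thetaTerm, triangular_add, triangular_one, add_zero, mul_one,
    zpow_add₀ (mul_ne_zero ha hb), zpow_add_one₀ ha]
  ring

theorem thetaTerm_neg (ha : a ≠ 0) (hb : b ≠ 0) (n : ℤ) :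
    thetaTerm a b (-n) = thetaTerm b a n := by
  rw [thetaTerm, thetaTerm, triangular_neg, zpow_add₀ (mul_ne_zero ha hb), mul_comm b a,
    mul_zpow a b n, zpow_neg]
  field_simp

theorem thetaTerm_one_sub (ha : a ≠ 0) (b : ℂ) (n : ℤ) :
    thetaTerm a b (1 - n) = a * thetaTerm a⁻¹ (a ^ 2 * b) n := by
  have h_tri : triangular (1 - n) = triangular n := by
    have h := two_mul_triangular n
    have h_one_sub := two_mul_triangular (1 - n)
    linarith
  have h_mul : a⁻¹ * (a ^ 2 * b) = a * b := by field_simp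
  rw [thetaTerm, thetaTerm, h_tri, h_mul, zpow_sub₀ ha, zpow_one, inv_zpow, div_eq_mul_inv,
    mul_assoc]

theorem thetaTerm_pow_pow {q : ℂ} (hq : q ≠ 0) (i j : ℕ) (n : ℤ) :
    thetaTerm (q ^ i) (q ^ j) n = q ^ (i * n + (i + j) * triangular n) := by
  rw [thetaTerm, ← pow_add, zpow_add₀ hq, zpow_mul, zpow_mul, zpow_natCast, ← Nat.cast_add,
    zpow_natCast]

theorem thetaTerm_self {q : ℂ} (hq : q ≠ 0) (n : ℤ) : thetaTerm q q n = q ^ (n ^ 2) := by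
  have h := thetaTerm_pow_pow hq 1 1 n
  rw [pow_one] at h
  rw [h]
  congr 1
  linear_combination two_mul_triangular n

theorem summable_norm_thetaTerm_natCast (ha : a ≠ 0) (hb : b ≠ 0) (hab : ‖a * b‖ < 1) :
    Summable fun n : ℕ => ‖thetaTerm a b n‖ := by
  have h_ratio (n : ℕ) :
      ‖a‖ * ‖a * b‖ ^ n = ‖‖thetaTerm a b (n + 1 : ℕ)‖‖ / ‖‖thetaTerm a b n‖‖ := by
    rw [norm_norm, norm_norm, Nat.cast_succ, thetaTerm_add_one ha hb, norm_mul _ (thetaTerm a b n),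
      mul_div_cancel_right₀ _ (norm_ne_zero_iff.2 (thetaTerm_ne_zero ha hb n)), zpow_natCast,
      norm_mul a ((a * b) ^ n), norm_pow]
  have h_tendsto := (tendsto_pow_atTop_nhds_zero_of_lt_one (norm_nonneg (a * b)) hab).const_mul ‖a‖
  rw [mul_zero] at h_tendsto
  exact summable_of_ratio_test_tendsto_lt_one zero_lt_one
    (.of_forall fun n => norm_ne_zero_iff.2 (thetaTerm_ne_zero ha hb n))
    (h_tendsto.congr h_ratio)

theorem summable_norm_thetaTerm (ha : a ≠ 0) (hb : b ≠ 0) (hab : ‖a * b‖ < 1) :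
    Summable fun n : ℤ => ‖thetaTerm a b n‖ := by
  refine (summable_norm_thetaTerm_natCast ha hb hab).of_nat_of_neg ?_
  simp only [thetaTerm_neg ha hb]
  exact summable_norm_thetaTerm_natCast hb ha (by rwa [mul_comm])

end ThetaSeries

section TripleProduct

variable {a b : ℂ}

theorem hasSum_offsetQBinomial_mul_thetaTerm_succ (ha : a ≠ 0) (hb : b ≠ 0) (hab : ‖a * b‖ < 1)
    {m n : ℕ} {S : ℂ} (hS : HasSum (fun j => offsetQBinomial (a * b) m n j * thetaTerm a b j) S) :
    HasSum (fun j => offsetQBinomial (a * b) (m + 1) n j * thetaTerm a b j)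
      (S * (1 - -a * (a * b) ^ m)) := by
  have hQ : a * b ≠ 0 := mul_ne_zero ha hb
  have h_shift := ((Equiv.subRight (1 : ℤ)).hasSum_iff.2 hS).mul_left (a * (a * b) ^ m)
  convert hS.add h_shift using 1
  · funext j
    have h_term : thetaTerm a b j = a * (a * b) ^ (j - 1) * thetaTerm a b (j - 1) := by
      rw [← thetaTerm_add_one ha hb, sub_add_cancel]
    have h_pow : (a * b) ^ m = (a * b) ^ ((m : ℤ) + 1 - j) * (a * b) ^ (j - 1) := by
      rw [← zpow_add₀ hQ, ← zpow_natCast]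
      congr 1
      ring
    simp only [Function.comp_apply, Equiv.subRight_apply]
    rw [offsetQBinomial_succ_left hQ hab, add_mul, h_term, h_pow]
    ring
  · ring

theorem hasSum_offsetQBinomial_mul_thetaTerm_swap (ha : a ≠ 0) (hb : b ≠ 0) {m n : ℕ} {S : ℂ}
    (hS : HasSum (fun j => offsetQBinomial (a * b) m n j * thetaTerm a b j) S) :
    HasSum (fun j => offsetQBinomial (b * a) n m j * thetaTerm b a j) S := by
  convert (Equiv.neg ℤ).hasSum_iff.2 hS using 1
  funext j
  rw [Function.comp_apply, Equiv.neg_apply, offsetQBinomial_neg, thetaTerm_neg ha hb, mul_comm b a]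

theorem hasSum_offsetQBinomial_mul_thetaTerm (ha : a ≠ 0) (hb : b ≠ 0) (hab : ‖a * b‖ < 1)
    (m n : ℕ) :
    HasSum (fun j => offsetQBinomial (a * b) m n j * thetaTerm a b j)
      (qPoch (-a) (a * b) m * qPoch (-b) (a * b) n) := by
  induction m with
  | succ m ih =>
    rw [qPoch_succ, mul_right_comm]
    exact hasSum_offsetQBinomial_mul_thetaTerm_succ ha hb hab ih
  | zero =>
    induction n with
    | zero =>
      convert hasSum_single (0 : ℤ) fun j hj => ?_ using 1
      · simp [qPoch, thetaTerm, offsetQBinomial_zero_zero, triangular]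
      · rw [offsetQBinomial_zero_zero, if_neg hj, zero_mul]
    | succ n ih =>
      have h := hasSum_offsetQBinomial_mul_thetaTerm_succ hb ha (by rwa [mul_comm])
        (hasSum_offsetQBinomial_mul_thetaTerm_swap ha hb ih)
      convert hasSum_offsetQBinomial_mul_thetaTerm_swap hb ha h using 1
      rw [qPoch_succ, ← mul_assoc, mul_comm b a]

theorem ramTheta_eq_qPochInf (ha : a ≠ 0) (hb : b ≠ 0) (hab : ‖a * b‖ < 1) :
    ramTheta a b = qPochInf (-a) (a * b) * qPochInf (-b) (a * b) * qPochInf (a * b) (a * b) := by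
  obtain ⟨C, hC⟩ := exists_norm_offsetQBinomial_le hab
  have h_tsum : Tendsto (fun n : ℕ => ∑' j, offsetQBinomial (a * b) n n j * thetaTerm a b j) atTop
      (𝓝 (∑' j, (qPochInf (a * b) (a * b))⁻¹ * thetaTerm a b j)) := by
    refine tendsto_tsum_of_dominated_convergence
      ((summable_norm_thetaTerm ha hb hab).mul_left C)
      (fun j => (tendsto_offsetQBinomial hab j).mul_const _) (.of_forall fun n j => ?_)
    rw [norm_mul]
    gcongr
    exact hC n n j
  have h_prod : Tendsto (fun n : ℕ => ∑' j, offsetQBinomial (a * b) n n j * thetaTerm a b j) atTop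
      (𝓝 (qPochInf (-a) (a * b) * qPochInf (-b) (a * b))) :=
    ((tendsto_qPoch (-a) hab).mul (tendsto_qPoch (-b) hab)).congr fun n =>
      (hasSum_offsetQBinomial_mul_thetaTerm ha hb hab n n).tsum_eq.symm
  rw [← tendsto_nhds_unique h_tsum h_prod, tsum_mul_left, ← ramTheta_eq_tsum ha b, mul_comm,
    mul_inv_cancel_left₀ (qPochInf_ne_zero hab hab)]

theorem ramTheta_ne_zero (ha₀ : a ≠ 0) (hb₀ : b ≠ 0) (ha : ‖a‖ < 1) (hb : ‖b‖ < 1) :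
    ramTheta a b ≠ 0 := by
  have hab : ‖a * b‖ < 1 := by
    rw [norm_mul]
    exact mul_lt_one_of_nonneg_of_lt_one_left (norm_nonneg a) ha hb.le
  rw [ramTheta_eq_qPochInf ha₀ hb₀ hab]
  exact mul_ne_zero (mul_ne_zero (qPochInf_ne_zero (by rwa [norm_neg]) hab)
    (qPochInf_ne_zero (by rwa [norm_neg]) hab)) (qPochInf_ne_zero hab hab)

end TripleProduct

section ProductFormulas

variable {a b c d : ℂ}

theorem hasSum_ramTheta_mul_ramTheta (ha : a ≠ 0) (hb : b ≠ 0) (hc : c ≠ 0) (hd : d ≠ 0)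
    (hab : ‖a * b‖ < 1) (hcd : ‖c * d‖ < 1) :
    HasSum (fun p : ℤ × ℤ => thetaTerm a b p.1 * thetaTerm c d p.2)
      (ramTheta a b * ramTheta c d) := by
  have h₁ := summable_norm_thetaTerm ha hb hab
  have h₂ := summable_norm_thetaTerm hc hd hcd
  rw [ramTheta_eq_tsum ha, ramTheta_eq_tsum hc, tsum_mul_tsum_of_summable_norm h₁ h₂]
  exact (summable_mul_of_summable_norm h₁ h₂).hasSum

theorem thetaTerm_add_mul_thetaTerm_sub (ha : a ≠ 0) (hb : b ≠ 0) (hc : c ≠ 0) (h : a * b = c * d)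
    (s t : ℤ) :
    thetaTerm a b (s + t) * thetaTerm c d (s - t) =
      thetaTerm (a * c) (b * d) s * thetaTerm (a * d) (b * c) t := by
  have hQ : a * b ≠ 0 := mul_ne_zero ha hb
  have hd : d = a * b / c := by rw [h, mul_div_cancel_left₀ d hc]
  have h_tri :
      triangular (s + t) + triangular (s - t) = 2 * triangular s + 2 * triangular t + t := by
    rw [sub_eq_add_neg, triangular_add, triangular_add, triangular_neg]
    ring
  have h_ac : a * c * (b * d) = (a * b) ^ (2 : ℤ) := by
    rw [zpow_ofNat]
    linear_combination -(a * b) * h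
  have h_ad : a * d * (b * c) = (a * b) ^ (2 : ℤ) := by rw [← h_ac]; ring
  calc thetaTerm a b (s + t) * thetaTerm c d (s - t)
      = a ^ (s + t) * c ^ (s - t) * (a * b) ^ (triangular (s + t) + triangular (s - t)) := by
        rw [thetaTerm, thetaTerm, ← h, zpow_add₀ hQ]
        ring
    _ = thetaTerm (a * c) (b * d) s * thetaTerm (a * d) (b * c) t := by
        rw [thetaTerm, thetaTerm, h_ac, h_ad, h_tri, hd, ← zpow_mul, ← zpow_mul, zpow_add₀ hQ,
          zpow_add₀ hQ, zpow_add₀ ha, zpow_sub₀ hc, mul_zpow a c, mul_zpow a (_ / _), div_zpow]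
        ring

theorem thetaTerm_one_sub_mul_thetaTerm_sub (ha : a ≠ 0) (hb : b ≠ 0) (hc : c ≠ 0)
    (hd : d ≠ 0) (h : a * b = c * d) (s t : ℤ) :
    thetaTerm a b (1 - (s + t)) * thetaTerm c d (t - s) =
      a * (thetaTerm (b / c) (a * c ^ 2 * d) s * thetaTerm (b / d) (a * c * d ^ 2) t) := by
  have h_mul : a⁻¹ * (a ^ 2 * b) = d * c := by
    rw [mul_comm d c, ← h]
    field_simp
  have h_bc : a⁻¹ * d = b / c := by
    field_simp
    linear_combination -h
  have h_bd : a⁻¹ * c = b / d := by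
    field_simp
    linear_combination -h
  rw [thetaTerm_one_sub ha, ← neg_sub s t, thetaTerm_neg hc hd, mul_assoc,
    thetaTerm_add_mul_thetaTerm_sub (inv_ne_zero ha) (by positivity) hd h_mul, h_bc, h_bd,
    show a ^ 2 * b * c = a * c ^ 2 * d by linear_combination a * c * h,
    show a ^ 2 * b * d = a * c * d ^ 2 by linear_combination a * d * h]

/-- Ramanujan's product formula (Berndt, *Ramanujan's Notebooks III*, Chapter 16, Entry 29). -/
theorem ramTheta_mul_ramTheta (ha : a ≠ 0) (hb : b ≠ 0) (hc : c ≠ 0) (hd : d ≠ 0)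
    (hab : ‖a * b‖ < 1) (h : a * b = c * d) :
    ramTheta a b * ramTheta c d =
      ramTheta (a * c) (b * d) * ramTheta (a * d) (b * c) +
        a * (ramTheta (b / c) (a * c ^ 2 * d) * ramTheta (b / d) (a * c * d ^ 2)) := by
  have hcd : ‖c * d‖ < 1 := h ▸ hab
  have h_sq {x : ℂ} (hx : x = (a * b) ^ 2) : ‖x‖ < 1 := hx ▸ norm_pow_lt_one hab two_ne_zero
  refine (hasSum_ramTheta_mul_ramTheta ha hb hc hd hab hcd).unique (hasSum_int_prod_of_parity ?_ ?_)
  · simp only [thetaTerm_add_mul_thetaTerm_sub ha hb hc h]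
    refine hasSum_ramTheta_mul_ramTheta ?_ ?_ ?_ ?_ (h_sq ?_) (h_sq ?_)
    any_goals positivity
    · linear_combination -(a * b) * h
    · linear_combination -(a * b) * h
  · simp only [thetaTerm_one_sub_mul_thetaTerm_sub ha hb hc hd h]
    refine (hasSum_ramTheta_mul_ramTheta ?_ ?_ ?_ ?_ (h_sq ?_) (h_sq ?_)).mul_left a
    any_goals positivity
    · field_simp
      linear_combination -h
    · field_simp
      linear_combination -h

theorem ramTheta_mul_add_mul_neg (ha : a ≠ 0) (hb : b ≠ 0) (hc : c ≠ 0) (hd : d ≠ 0)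
    (hab : ‖a * b‖ < 1) (h : a * b = c * d) :
    ramTheta a b * ramTheta c d + ramTheta (-a) (-b) * ramTheta (-c) (-d) =
      2 * (ramTheta (a * c) (b * d) * ramTheta (a * d) (b * c)) := by
  have h_neg := ramTheta_mul_ramTheta (neg_ne_zero.2 ha) (neg_ne_zero.2 hb) (neg_ne_zero.2 hc)
    (neg_ne_zero.2 hd) (by rwa [neg_mul_neg]) (by rwa [neg_mul_neg, neg_mul_neg])
  rw [ramTheta_mul_ramTheta ha hb hc hd hab h, h_neg]
  simp only [neg_div_neg_eq, neg_sq, neg_mul, mul_neg, neg_neg]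
  ring

theorem ramTheta_mul_sub_mul_neg (ha : a ≠ 0) (hb : b ≠ 0) (hc : c ≠ 0) (hd : d ≠ 0)
    (hab : ‖a * b‖ < 1) (h : a * b = c * d) :
    ramTheta a b * ramTheta c d - ramTheta (-a) (-b) * ramTheta (-c) (-d) =
      2 * a * (ramTheta (b / c) (a * c ^ 2 * d) * ramTheta (b / d) (a * c * d ^ 2)) := by
  have h_add := ramTheta_mul_add_mul_neg ha hb hc hd hab h
  rw [ramTheta_mul_ramTheta ha hb hc hd hab h] at h_add ⊢
  linear_combination -h_add

theorem ramTheta_mul_ramTheta_neg (ha : a ≠ 0) (hb : b ≠ 0) (hab : ‖a * b‖ < 1) :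
    ramTheta a b * ramTheta (-a) (-b) = ramTheta (-a ^ 2) (-b ^ 2) * phi (-(a * b)) := by
  have h := ramTheta_mul_add_mul_neg ha hb (neg_ne_zero.2 ha) (neg_ne_zero.2 hb) hab
    (neg_mul_neg a b).symm
  rw [neg_neg, neg_neg, mul_comm (ramTheta (-a) (-b)), ← two_mul] at h
  have h' := mul_left_cancel₀ two_ne_zero h
  rw [h', phi]
  congr 2 <;> ring

end ProductFormulas

section DegreeFive

variable {q : ℂ}

theorem ramTheta_mul_sub_degree_five (hq₀ : q ≠ 0) (hq : ‖q‖ < 1) :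
    ramTheta q (q ^ 9) * ramTheta (-q ^ 3) (-q ^ 7) -
        ramTheta (-q) (-q ^ 9) * ramTheta (q ^ 3) (q ^ 7) =
      2 * q * (ramTheta (-q ^ 6) (-q ^ 14) * ramTheta (-q ^ 2) (-q ^ 18)) := by
  have h := ramTheta_mul_sub_mul_neg (a := q) (b := q ^ 9) (c := -q ^ 3) (d := -q ^ 7) hq₀
    (by positivity) (neg_ne_zero.2 (by positivity)) (neg_ne_zero.2 (by positivity))
    (by simpa only [← pow_succ'] using norm_pow_lt_one hq (by norm_num)) (by ring)
  rw [neg_neg, neg_neg] at h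
  rw [h]
  congr 3 <;> field_simp

theorem thetaTerm_mul_thetaTerm_ideal (hq₀ : q ≠ 0) (s t : ℤ) :
    thetaTerm q q (2 * s + t) * thetaTerm q q (2 * t - s) =
      thetaTerm (q ^ 5) (q ^ 5) s * thetaTerm (q ^ 5) (q ^ 5) t := by
  simp only [thetaTerm_self hq₀, thetaTerm_pow_pow hq₀, ← zpow_add₀ hq₀]
  congr 1
  linear_combination -5 * two_mul_triangular s - 5 * two_mul_triangular t

theorem thetaTerm_mul_thetaTerm_baseCoset (hq₀ : q ≠ 0) (s t : ℤ) :
    thetaTerm q q (2 * s + t - 1) * thetaTerm q q (2 * t - s) =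
      q * (thetaTerm q (q ^ 9) s * thetaTerm (q ^ 3) (q ^ 7) t) := by
  have h_term : thetaTerm q (q ^ 9) s = q ^ (s + 10 * triangular s) := by
    simpa only [pow_one, Nat.cast_one, one_mul, Nat.cast_ofNat, Int.reduceAdd] using
      thetaTerm_pow_pow hq₀ 1 9 s
  rw [h_term, thetaTerm_self hq₀, thetaTerm_self hq₀, thetaTerm_pow_pow hq₀, ← zpow_add₀ hq₀,
    ← zpow_add₀ hq₀, ← zpow_one_add₀ hq₀]
  congr 1
  linear_combination -5 * two_mul_triangular s - 5 * two_mul_triangular t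

theorem phi_sq_sub_phi_pow_five_sq (hq₀ : q ≠ 0) (hq : ‖q‖ < 1) :
    phi q ^ 2 - phi (q ^ 5) ^ 2 = 4 * q * (ramTheta q (q ^ 9) * ramTheta (q ^ 3) (q ^ 7)) := by
  have h_norm {n : ℕ} (hn : n ≠ 0) : ‖q ^ n‖ < 1 := norm_pow_lt_one hq hn
  let F : ℤ × ℤ → ℂ := fun p => thetaTerm q q p.1 * thetaTerm q q p.2
  have hF : HasSum F (phi q ^ 2) := by
    rw [sq]
    refine hasSum_ramTheta_mul_ramTheta hq₀ hq₀ hq₀ hq₀ ?_ ?_ <;>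
      simpa only [← sq] using h_norm two_ne_zero
  have hF_mulI (x y : ℤ) : F (-y, x) = F (x, y) := by
    simp only [F, thetaTerm_neg hq₀ hq₀, mul_comm]
  have h_ideal : HasSum (fun p : ℤ × ℤ => F (2 * p.1 + p.2, 2 * p.2 - p.1)) (phi (q ^ 5) ^ 2) := by
    have hq₅ : q ^ 5 ≠ 0 := pow_ne_zero 5 hq₀
    simp only [F, thetaTerm_mul_thetaTerm_ideal hq₀, sq (phi (q ^ 5))]
    refine hasSum_ramTheta_mul_ramTheta hq₅ hq₅ hq₅ hq₅ ?_ ?_ <;>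
      simpa only [← pow_add] using h_norm (by norm_num)
  have h_coset : HasSum (fun p : ℤ × ℤ => F (2 * p.1 + p.2 - 1, 2 * p.2 - p.1))
      (q * (ramTheta q (q ^ 9) * ramTheta (q ^ 3) (q ^ 7))) := by
    simp only [F, thetaTerm_mul_thetaTerm_baseCoset hq₀]
    refine (hasSum_ramTheta_mul_ramTheta hq₀ ?_ ?_ ?_ ?_ ?_).mul_left q
    any_goals positivity
    · simpa only [← pow_succ'] using h_norm (by norm_num)
    · simpa only [← pow_add] using h_norm (by norm_num)
  rw [hF.unique (hasSum_int_prod_of_rotation_invariant hF_mulI h_ideal h_coset), nsmul_eq_mul]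
  push_cast
  ring

theorem psi_eq_qPochInf (hq₀ : q ≠ 0) (hq : ‖q‖ < 1) :
    psi q = qPochInf (-q) (q ^ 2) * qPochInf (q ^ 4) (q ^ 4) := by
  have h_mul : q * q ^ 3 = q ^ 4 := by ring
  have h_norm : ‖q ^ 4‖ < 1 := norm_pow_lt_one hq four_ne_zero
  rw [psi, ramTheta_eq_qPochInf hq₀ (pow_ne_zero 3 hq₀) (h_mul ▸ h_norm), h_mul,
    qPochInf_eq_prod_fin (-q) (norm_pow_lt_one hq two_ne_zero) 2]
  simp only [Fin.prod_univ_two, Fin.coe_ofNat_eq_mod, Nat.reduceMod]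
  ring_nf

theorem ramTheta_mul_ramTheta_mul_psi_pow_five (hq₀ : q ≠ 0) (hq : ‖q‖ < 1) :
    ramTheta q (q ^ 9) * ramTheta (q ^ 3) (q ^ 7) * psi (q ^ 5) * qPochInf (q ^ 4) (q ^ 4) =
      psi q * qPochInf (q ^ 10) (q ^ 10) ^ 2 * qPochInf (q ^ 20) (q ^ 20) := by
  have h₁₀ : ‖q ^ 10‖ < 1 := norm_pow_lt_one hq (by norm_num)
  have h_mul₁ : q * q ^ 9 = q ^ 10 := by ring
  have h_mul₃ : q ^ 3 * q ^ 7 = q ^ 10 := by ring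
  have h_dissect : qPochInf (-q) (q ^ 2) = qPochInf (-q) (q ^ 10) * qPochInf (-q ^ 3) (q ^ 10) *
      qPochInf (-q ^ 5) (q ^ 10) * qPochInf (-q ^ 7) (q ^ 10) * qPochInf (-q ^ 9) (q ^ 10) := by
    rw [qPochInf_eq_prod_fin (-q) (norm_pow_lt_one hq two_ne_zero) 5]
    simp only [Fin.prod_univ_five, Fin.coe_ofNat_eq_mod, Nat.reduceMod]
    ring_nf
  rw [ramTheta_eq_qPochInf hq₀ (by positivity) (h_mul₁ ▸ h₁₀), h_mul₁,
    ramTheta_eq_qPochInf (by positivity) (by positivity) (h_mul₃ ▸ h₁₀), h_mul₃,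
    psi_eq_qPochInf hq₀ hq, psi_eq_qPochInf (pow_ne_zero 5 hq₀) (norm_pow_lt_one hq (by norm_num)),
    h_dissect]
  simp only [← pow_mul, Nat.reduceMul]
  ring

end DegreeFive

section Quotients

variable {q : ℂ}

theorem ramTheta_neg_pow_neg_pow_ne_zero (hq₀ : q ≠ 0) (hq : ‖q‖ < 1) {i j : ℕ} (hi : i ≠ 0)
    (hj : j ≠ 0) : ramTheta (-q ^ i) (-q ^ j) ≠ 0 :=
  ramTheta_ne_zero (neg_ne_zero.2 (pow_ne_zero i hq₀)) (neg_ne_zero.2 (pow_ne_zero j hq₀))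
    (by rw [norm_neg]; exact norm_pow_lt_one hq hi) (by rw [norm_neg]; exact norm_pow_lt_one hq hj)

theorem psi_ne_zero (hq₀ : q ≠ 0) (hq : ‖q‖ < 1) : psi q ≠ 0 :=
  ramTheta_ne_zero hq₀ (pow_ne_zero 3 hq₀) hq (norm_pow_lt_one hq three_ne_zero)

theorem ramTheta_div_sub_ramTheta_div (hq₀ : q ≠ 0) (hq : ‖q‖ < 1) :
    ramTheta q (q ^ 9) / ramTheta (-q) (-q ^ 9) -
        ramTheta (q ^ 3) (q ^ 7) / ramTheta (-q ^ 3) (-q ^ 7) =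
      (phi q ^ 2 - phi (q ^ 5) ^ 2) / (2 * phi (-q ^ 10) ^ 2) := by
  have h₁₀ : ‖q ^ 10‖ < 1 := norm_pow_lt_one hq (by norm_num)
  have h_mul₁ : q * q ^ 9 = q ^ 10 := by ring
  have h_mul₃ : q ^ 3 * q ^ 7 = q ^ 10 := by ring
  have h_neg₁ := ramTheta_mul_ramTheta_neg hq₀ (pow_ne_zero 9 hq₀) (h_mul₁ ▸ h₁₀)
  have h_neg₃ := ramTheta_mul_ramTheta_neg (pow_ne_zero 3 hq₀) (pow_ne_zero 7 hq₀) (h_mul₃ ▸ h₁₀)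
  have h_sub := ramTheta_mul_sub_degree_five hq₀ hq
  have h_phi := phi_sq_sub_phi_pow_five_sq hq₀ hq
  have h_ne₁ : ramTheta (-q) (-q ^ 9) ≠ 0 := by
    simpa only [pow_one] using ramTheta_neg_pow_neg_pow_ne_zero hq₀ hq one_ne_zero (by norm_num)
  have h_ne₃ : ramTheta (-q ^ 3) (-q ^ 7) ≠ 0 :=
    ramTheta_neg_pow_neg_pow_ne_zero hq₀ hq (by norm_num) (by norm_num)
  have h_ne₁₀ : phi (-q ^ 10) ≠ 0 :=
    ramTheta_neg_pow_neg_pow_ne_zero hq₀ hq (by norm_num) (by norm_num)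
  simp only [h_mul₁, h_mul₃, ← pow_mul, Nat.reduceMul] at h_neg₁ h_neg₃
  have h_ne : 2 * phi (-q ^ 10) ^ 2 ≠ 0 := mul_ne_zero two_ne_zero (pow_ne_zero 2 h_ne₁₀)
  rw [h_phi, div_sub_div _ _ h_ne₁ h_ne₃, h_sub, div_eq_div_iff (mul_ne_zero h_ne₁ h_ne₃) h_ne]
  linear_combination
    -4 * q * (ramTheta (q ^ 3) (q ^ 7) * ramTheta (-q ^ 3) (-q ^ 7)) * h_neg₁ -
      4 * q * (ramTheta (-q ^ 2) (-q ^ 18) * phi (-q ^ 10)) * h_neg₃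

theorem ramTheta_div_mul_ramTheta_div (hq₀ : q ≠ 0) (hq : ‖q‖ < 1) :
    ramTheta q (q ^ 9) / ramTheta (-q) (-q ^ 9) *
        (ramTheta (q ^ 3) (q ^ 7) / ramTheta (-q ^ 3) (-q ^ 7)) =
      psi q * psi (-q ^ 5) / (psi (-q) * psi (q ^ 5)) := by
  have hq_neg₀ : -q ≠ 0 := neg_ne_zero.2 hq₀
  have hq_neg : ‖-q‖ < 1 := by rwa [norm_neg]
  have h := ramTheta_mul_ramTheta_mul_psi_pow_five hq₀ hq
  have h_neg := ramTheta_mul_ramTheta_mul_psi_pow_five hq_neg₀ hq_neg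
  simp only [Even.neg_pow, Odd.neg_pow, Nat.even_iff, Nat.odd_iff, Nat.reduceMod] at h_neg
  have h_ne₁ : ramTheta (-q) (-q ^ 9) ≠ 0 := by
    simpa only [pow_one] using ramTheta_neg_pow_neg_pow_ne_zero hq₀ hq one_ne_zero (by norm_num)
  have h_ne₃ : ramTheta (-q ^ 3) (-q ^ 7) ≠ 0 :=
    ramTheta_neg_pow_neg_pow_ne_zero hq₀ hq (by norm_num) (by norm_num)
  have h_ne_psi : psi (-q) * psi (q ^ 5) ≠ 0 :=
    mul_ne_zero (psi_ne_zero hq_neg₀ hq_neg)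
      (psi_ne_zero (pow_ne_zero 5 hq₀) (norm_pow_lt_one hq (by norm_num)))
  have h_ne_qPochInf {n : ℕ} (hn : n ≠ 0) : qPochInf (q ^ n) (q ^ n) ≠ 0 :=
    qPochInf_ne_zero (norm_pow_lt_one hq hn) (norm_pow_lt_one hq hn)
  have h_ne : qPochInf (q ^ 4) (q ^ 4) *
      (qPochInf (q ^ 10) (q ^ 10) ^ 2 * qPochInf (q ^ 20) (q ^ 20)) ≠ 0 :=
    mul_ne_zero (h_ne_qPochInf (by norm_num))
      (mul_ne_zero (pow_ne_zero 2 (h_ne_qPochInf (by norm_num))) (h_ne_qPochInf (by norm_num)))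
  rw [div_mul_div_comm, div_eq_div_iff (mul_ne_zero h_ne₁ h_ne₃) h_ne_psi]
  refine mul_left_cancel₀ h_ne ?_
  linear_combination
    psi (-q) * (qPochInf (q ^ 10) (q ^ 10) ^ 2 * qPochInf (q ^ 20) (q ^ 20)) * h -
      psi q * (qPochInf (q ^ 10) (q ^ 10) ^ 2 * qPochInf (q ^ 20) (q ^ 20)) * h_neg

end Quotients

theorem stmt10_general {q : ℂ} (hq : ‖q‖ < 1) :
    (ramTheta q (q ^ 9) / ramTheta (-q) (-q ^ 9)) ^ 2 +
        (ramTheta (q ^ 3) (q ^ 7) / ramTheta (-q ^ 3) (-q ^ 7)) ^ 2 =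
      phi q ^ 4 / (4 * phi (-q ^ 10) ^ 4) + phi (q ^ 5) ^ 4 / (4 * phi (-q ^ 10) ^ 4) -
        phi q ^ 2 * phi (q ^ 5) ^ 2 / (2 * phi (-q ^ 10) ^ 4) +
        2 * psi q * psi (-q ^ 5) / (psi (-q) * psi (q ^ 5)) := by
  rcases eq_or_ne q 0 with rfl | hq₀
  · norm_num [phi, psi, ramTheta_zero_zero]
  have h_sub := ramTheta_div_sub_ramTheta_div hq₀ hq
  have h_mul := ramTheta_div_mul_ramTheta_div hq₀ hq
  set X := ramTheta q (q ^ 9) / ramTheta (-q) (-q ^ 9)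
  set Y := ramTheta (q ^ 3) (q ^ 7) / ramTheta (-q ^ 3) (-q ^ 7)
  calc X ^ 2 + Y ^ 2 = (X - Y) ^ 2 + 2 * (X * Y) := by ring
    _ = _ := by
      rw [h_sub, h_mul]
      ring

theorem stmt10 (q : ℝ) (hq0 : 0 < q) (hq1 : q < 1) :
    Gamma1 q ^ 2 + Gamma2 q ^ 2
      = phi (q : ℂ) ^ 4 / (4 * phi (-(q : ℂ) ^ 10) ^ 4)
        + phi ((q : ℂ) ^ 5) ^ 4 / (4 * phi (-(q : ℂ) ^ 10) ^ 4)
        - phi (q : ℂ) ^ 2 * phi ((q : ℂ) ^ 5) ^ 2 / (2 * phi (-(q : ℂ) ^ 10) ^ 4)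
        + 2 * psi (q : ℂ) * psi (-(q : ℂ) ^ 5) / (psi (-(q : ℂ)) * psi ((q : ℂ) ^ 5)) := by
  exact stmt10_general (by rwa [Complex.norm_real, Real.norm_of_nonneg hq0.le])
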